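/- arXiv:2511.07120 — 2 statements merged into one kernel-verified Lean document; each statement's English description precedes it below -/
import Mathlib

section
/- Sup-norm bound for regularized translation-invariant kernels: Let d,n be positive integers, σ>0, 𝕄=(m₁,…,m_n)∈ℕⁿ and m:=m₁+…+m_n. For μ∈(0,1] write [μ]:=μ^{1/σ} and let K̃_μ be the fundamental solution of (1−[μ]²Δ)^{d+2} on ℝ^d, i.e. the nonnegative integrable function with ∫K̃_μ=1 whose Fourier transform equals ξ↦(1+[μ]²|ξ|²)^{−(d+2)}. Then there exists a constant C such that ‖K̃_μ^{⊗(n+m)}∗V‖_{L^∞((ℝ^d)^{n+m})} ≤ C·[μ]^{−d(n+m−1)}·‖V‖_{𝒱_t^𝕄} for all μ∈(0,1] and all V∈𝒱_t^𝕄, where K̃_μ^{⊗(n+m)}∗V denotes the convolution of V with K̃_μ in each of its n+m ℝ^d-variables. -/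
/-!
Write `a = [μ] = μ^{1/σ} ∈ (0,1]`. The proof rests on the pointwise bound
`K̃_μ(x) ≤ C a^{-d} ∏ᵢ (1 + xᵢ²)⁻¹` for almost every `x`.

To obtain it, `(1+s)^{-(d+2)} = ∫₀^∞ t^{d+1} e^{-t} / (d+1)! · e^{-ts} dt` with `s = a²|ξ|²`
exhibits the prescribed Fourier transform as that of a Gamma mixture of Gaussians (`bes`,
`ft_bes`). Finite measures are determined by their characteristic functionals, so `K̃_μ` agrees
almost everywhere with this mixture (`ae_eq_of_ft_eq`), and the explicit formula gives the decay
(`bes_le`). Consequently the supremum of `K̃_μ` and also the supremum of its `2π`-periodization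
(`exists_periodization_bound`) are `O(a^{-d})`.

For the estimate itself (`core_bound`), the `m` kernels in the `y`-variables are bounded by their
supremum, which leaves the fibre integral `∫ |V(x;y)| dy`. This is `2π`-periodic in each `x_j`
(`fib_lat`), so the integrals over `x₂,…,x_n` unfold to the fundamental domain, where each kernel is
replaced by its periodization, and the remaining integral of `|V|` is at most the norm of `V`.
The last kernel, in the variable `x₁`, is integrated and has mass one. This gives
`a^{-d}` for each of the other `n+m-1` variables.
-/

open MeasureTheory
open scoped ENNReal

noncomputable section

/-- Points of `ℝ^d`. -/
abbrev Vd (d : ℕ) := Fin d → ℝ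

/-- The Fourier transform with the convention `𝓕f(ξ) = ∫ f(x) e^{-i⟨x,ξ⟩} dx`. -/
def ft (d : ℕ) (f : Vd d → ℝ) (ξ : Vd d) : ℂ :=
  ∫ x : Vd d, Complex.exp (-Complex.I * (∑ i, (x i : ℂ) * (ξ i : ℂ))) * (f x : ℂ)

/-- The family `μ ↦ K̃_μ` of fundamental solutions of `(1 - [μ]²Δ)^{d+2}`, `[μ] = μ^{1/σ}`. -/
def IsBessel (d : ℕ) (σ : ℝ) (K : ℝ → Vd d → ℝ) : Prop :=
  ∀ μ ∈ Set.Ioc (0 : ℝ) 1,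
    (∀ x, 0 ≤ K μ x) ∧ Integrable (K μ) ∧ (∫ x, K μ x) = 1 ∧
    ∀ ξ : Vd d,
      ft d (K μ) ξ
        = (((1 + (μ ^ (1 / σ)) ^ 2 * ∑ i, ξ i ^ 2) ^ (d + 2) : ℝ) : ℂ)⁻¹

/-- A fundamental domain `[-π,π)^d` of the torus `(ℝ/2πℤ)^d`. -/
def fundDom (d : ℕ) : Set (Vd d) := Set.univ.pi fun _ : Fin d => Set.Ico (-Real.pi) Real.pi

/-- The `𝒱_t` norm: the supremum over the first `x`-variable of the integral of `|V|`
over the remaining `x`-variables (in a fundamental domain of the torus) and over all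
`y`-variables. -/
def vtNorm (d n' m : ℕ) (V : (Fin (n' + 1) → Vd d) → (Fin m → Vd d) → ℝ) : ℝ :=
  ⨆ x₁ : Vd d,
    ∫ p in (Set.univ.pi fun _ : Fin n' => fundDom d) ×ˢ (Set.univ : Set (Fin m → Vd d)),
      |V (Fin.cons x₁ p.1) p.2|

/-- Membership in the space `𝒱_t^𝕄` of translation-invariant kernels, in a flat encoding:
the kernel `V` has `n'+1` `x`-variables and `m` `y`-variables, and `g t` records the index
of the `x`-variable to whose group the `y`-variable `t` belongs. -/
structure IsVt (d n' m : ℕ) (g : Fin m → Fin (n' + 1))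
    (V : (Fin (n' + 1) → Vd d) → (Fin m → Vd d) → ℝ) : Prop where
  continuous : Continuous fun p : (Fin (n' + 1) → Vd d) × (Fin m → Vd d) => V p.1 p.2
  periodic : ∀ (x : Fin (n' + 1) → Vd d) (y : Fin m → Vd d) (q : Fin (n' + 1)) (i : Fin d),
    V (Function.update x q (x q + Pi.single i (2 * Real.pi)))
        (fun t => y t + (Function.update x q (x q + Pi.single i (2 * Real.pi))) (g t))
      = V x fun t => y t + x (g t)
  trans : ∀ (z : Vd d) (x : Fin (n' + 1) → Vd d) (y : Fin m → Vd d),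
    V (fun j => x j + z) (fun t => y t + z) = V x y
  integrable : ∀ x₁ : Vd d,
    IntegrableOn (fun p : (Fin n' → Vd d) × (Fin m → Vd d) => V (Fin.cons x₁ p.1) p.2)
      ((Set.univ.pi fun _ : Fin n' => fundDom d) ×ˢ Set.univ)
  bdd : BddAbove (Set.range fun x₁ : Vd d =>
    ∫ p in (Set.univ.pi fun _ : Fin n' => fundDom d) ×ˢ (Set.univ : Set (Fin m → Vd d)),
      |V (Fin.cons x₁ p.1) p.2|)

/-- The convolution `K^{⊗(n+m)} ∗ V` in each of the `n+m` `ℝ^d`-variables of `V`. -/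
def convVt (d n' m : ℕ) (K : Vd d → ℝ)
    (V : (Fin (n' + 1) → Vd d) → (Fin m → Vd d) → ℝ)
    (x : Fin (n' + 1) → Vd d) (y : Fin m → Vd d) : ℝ :=
  ∫ p : (Fin (n' + 1) → Vd d) × (Fin m → Vd d),
    (∏ j, K (x j - p.1 j)) * (∏ t, K (y t - p.2 t)) * V p.1 p.2

/-! ### The Bessel kernel as a mixture of Gaussians -/

/-- The weight `t^{d+1} e^{-t} / (d+1)!` of the Gamma distribution, for which
`∫₀^∞ w(t) e^{-ts} dt = (1+s)^{-(d+2)}`. -/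
def gw (d : ℕ) (t : ℝ) : ℝ := t ^ (d + 1) * Real.exp (-t) / (d + 1).factorial

/-- The product of one-dimensional heat kernels at time `t a²`, a Gaussian of variance `2ta²`
in each coordinate. -/
def hk (d : ℕ) (a t : ℝ) (x : Vd d) : ℝ :=
  ∏ i, ProbabilityTheory.gaussianPDFReal 0 (Real.toNNReal (2 * t * a ^ 2)) (x i)

/-- The Bessel kernel, i.e. the fundamental solution of `(1-a²Δ)^{d+2}`, as a Gamma mixture
of heat kernels. -/
def bes (d : ℕ) (a : ℝ) (x : Vd d) : ℝ := ∫ t in Set.Ioi (0 : ℝ), gw d t * hk d a t x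

/-- The integrable majorant `∏ᵢ (1 + xᵢ²)⁻¹`. -/
def beta (d : ℕ) (x : Vd d) : ℝ := ∏ i, (1 + x i ^ 2)⁻¹

lemma gw_nonneg (d : ℕ) {t : ℝ} (ht : 0 < t) : 0 ≤ gw d t := by
  unfold gw; positivity

lemma gpdf_nonneg (v : NNReal) (x : ℝ) : 0 ≤ ProbabilityTheory.gaussianPDFReal 0 v x :=
  ProbabilityTheory.gaussianPDFReal_nonneg 0 v x

lemma hk_nonneg (d : ℕ) (a t : ℝ) (x : Vd d) : 0 ≤ hk d a t x :=
  Finset.prod_nonneg fun _ _ => gpdf_nonneg _ _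

lemma measurable_gw_hk (d : ℕ) (a : ℝ) :
    Measurable fun p : ℝ × Vd d => gw d p.1 * hk d a p.1 p.2 := by
  unfold gw hk
  simp only [ProbabilityTheory.gaussianPDFReal]
  fun_prop

lemma integrableOn_gw (d : ℕ) : IntegrableOn (gw d) (Set.Ioi 0) := by
  have h := Real.GammaIntegral_convergent (s := (d : ℝ) + 2) (by positivity)
  have h' : IntegrableOn (fun x : ℝ => Real.exp (-x) * x ^ ((d : ℝ) + 2 - 1)
    / ((d + 1).factorial : ℝ)) (Set.Ioi 0) := h.div_const _
  refine h'.congr_fun (fun t ht => ?_) measurableSet_Ioi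
  simp only [gw]
  rw [show (d : ℝ) + 2 - 1 = ((d + 1 : ℕ) : ℝ) by push_cast; ring, Real.rpow_natCast]
  ring

lemma integral_gw_exp (d : ℕ) {s : ℝ} (hs : 0 ≤ s) :
    ∫ t in Set.Ioi (0 : ℝ), gw d t * Real.exp (-(t * s)) = ((1 + s) ^ (d + 2))⁻¹ := by
  have h := Real.integral_rpow_mul_exp_neg_mul_Ioi (a := (d : ℝ) + 2) (r := 1 + s)
    (by positivity) (by positivity)
  have h2 : ∫ t in Set.Ioi (0 : ℝ), gw d t * Real.exp (-(t * s))
      = ∫ t in Set.Ioi (0 : ℝ), (t ^ ((d : ℝ) + 2 - 1) * Real.exp (-((1 + s) * t)))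
          * ((d + 1).factorial : ℝ)⁻¹ := by
    refine setIntegral_congr_fun measurableSet_Ioi fun t ht => ?_
    simp only [gw]
    rw [show (d : ℝ) + 2 - 1 = ((d + 1 : ℕ) : ℝ) by push_cast; ring, Real.rpow_natCast,
      show -((1 + s) * t) = -t + -(t * s) by ring, Real.exp_add]
    ring
  rw [h2, integral_mul_const, h, show (d : ℝ) + 2 = ((d + 1 : ℕ) : ℝ) + 1 by push_cast; ring,
    Real.Gamma_nat_eq_factorial]
  have : ((d + 1).factorial : ℝ) ≠ 0 := by positivity
  rw [mul_assoc, mul_inv_cancel₀ this, mul_one,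
    show ((d + 1 : ℕ) : ℝ) + 1 = ((d + 2 : ℕ) : ℝ) by push_cast; ring, Real.rpow_natCast,
    one_div, inv_pow]

lemma toNNReal_ne {a t : ℝ} (ha : 0 < a) (ht : 0 < t) : Real.toNNReal (2 * t * a ^ 2) ≠ 0 := by
  have : 0 < 2 * t * a ^ 2 := by positivity
  simpa using this

lemma integrable_hk (d : ℕ) (a t : ℝ) : Integrable (hk d a t) :=
  Integrable.fintype_prod (μ := fun _ : Fin d => (volume : Measure ℝ))
    fun _ => ProbabilityTheory.integrable_gaussianPDFReal 0 _

lemma integral_hk (d : ℕ) {a t : ℝ} (ha : 0 < a) (ht : 0 < t) : ∫ x, hk d a t x = 1 := by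
  unfold hk
  rw [integral_fintype_prod_volume_eq_prod (fun (_ : Fin d) (x : ℝ) =>
    ProbabilityTheory.gaussianPDFReal 0 (Real.toNNReal (2 * t * a ^ 2)) x)]
  simp [ProbabilityTheory.integral_gaussianPDFReal_eq_one 0 (toNNReal_ne ha ht)]

lemma integral_gpdf_exp {v : NNReal} (hv : v ≠ 0) (ξ : ℝ) :
    ∫ x : ℝ, Complex.exp (-Complex.I * (x * ξ)) *
      (ProbabilityTheory.gaussianPDFReal 0 v x : ℂ) = Complex.exp (-(v * ξ ^ 2 / 2)) := by
  have h := ProbabilityTheory.charFun_gaussianReal (μ := 0) (v := v) (-ξ)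
  rw [charFun_apply_real, ProbabilityTheory.integral_gaussianReal_eq_integral_smul hv] at h
  convert h using 1
  · refine integral_congr_ae (Filter.Eventually.of_forall fun x => ?_)
    simp only [Complex.real_smul]
    rw [mul_comm]
    congr 2
    push_cast; ring
  · congr 1; push_cast; ring

lemma ft_hk (d : ℕ) {a t : ℝ} (ha : 0 < a) (ht : 0 < t) (ξ : Vd d) :
    ft d (hk d a t) ξ = (Real.exp (-(t * (a ^ 2 * ∑ i, ξ i ^ 2))) : ℂ) := by
  have h : ∀ x : Vd d, Complex.exp (-Complex.I * (∑ i, (x i : ℂ) * (ξ i : ℂ))) * (hk d a t x : ℂ)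
      = ∏ i, Complex.exp (-Complex.I * (x i * ξ i)) *
      (ProbabilityTheory.gaussianPDFReal 0 (Real.toNNReal (2 * t * a ^ 2)) (x i) : ℂ) := by
    intro x
    rw [Finset.prod_mul_distrib, ← Complex.exp_sum, Finset.mul_sum]
    simp [hk]
  unfold ft
  simp_rw [h]
  rw [integral_fintype_prod_volume_eq_prod (fun (i : Fin d) (x : ℝ) =>
    Complex.exp (-Complex.I * (x * ξ i)) *
      (ProbabilityTheory.gaussianPDFReal 0 (Real.toNNReal (2 * t * a ^ 2)) x : ℂ))]
  simp_rw [integral_gpdf_exp (toNNReal_ne ha ht)]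
  rw [← Complex.exp_sum, Complex.ofReal_exp]
  congr 1
  have h2 : ((Real.toNNReal (2 * t * a ^ 2) : ℝ) : ℂ) = 2 * t * a ^ 2 := by
    rw [Real.coe_toNNReal _ (by positivity)]; push_cast; ring
  rw [h2]
  push_cast
  rw [Finset.mul_sum, Finset.mul_sum, ← Finset.sum_neg_distrib]
  exact Finset.sum_congr rfl fun i _ => by ring

lemma integrable_gw_hk (d : ℕ) {a : ℝ} (ha : 0 < a) :
    Integrable (fun p : ℝ × Vd d => gw d p.1 * hk d a p.1 p.2)
      ((volume.restrict (Set.Ioi 0)).prod volume) := by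
  rw [integrable_prod_iff (measurable_gw_hk d a).aestronglyMeasurable]
  refine ⟨Filter.Eventually.of_forall fun t => (integrable_hk d a t).const_mul (gw d t), ?_⟩
  refine (integrableOn_gw d).congr_fun (fun t ht => ?_) measurableSet_Ioi
  have : ∀ x, ‖gw d t * hk d a t x‖ = gw d t * hk d a t x := fun x =>
    Real.norm_of_nonneg (mul_nonneg (gw_nonneg d ht) (hk_nonneg d a t x))
  simp only [this]
  rw [integral_const_mul, integral_hk d ha ht, mul_one]

lemma integrable_bes (d : ℕ) {a : ℝ} (ha : 0 < a) : Integrable (bes d a) :=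
  (integrable_gw_hk d ha).integral_prod_right

lemma bes_nonneg (d : ℕ) (a : ℝ) (x : Vd d) : 0 ≤ bes d a x :=
  setIntegral_nonneg measurableSet_Ioi fun _ ht =>
    mul_nonneg (gw_nonneg d ht) (hk_nonneg d a _ x)

lemma ft_bes (d : ℕ) {a : ℝ} (ha : 0 < a) (ξ : Vd d) :
    ft d (bes d a) ξ = (((1 + a ^ 2 * ∑ i, ξ i ^ 2) ^ (d + 2) : ℝ) : ℂ)⁻¹ := by
  have hInt := integrable_gw_hk d ha
  have hInt2 : Integrable (Function.uncurry fun (t : ℝ) (x : Vd d) =>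
      Complex.exp (-Complex.I * (∑ i, (x i : ℂ) * (ξ i : ℂ))) * ((gw d t * hk d a t x : ℝ) : ℂ))
      ((volume.restrict (Set.Ioi 0)).prod volume) := by
    refine hInt.mono ?_ (Filter.Eventually.of_forall fun p => ?_)
    · have := (measurable_gw_hk d a)
      refine Measurable.aestronglyMeasurable ?_
      refine Measurable.mul ?_ (Complex.measurable_ofReal.comp this)
      fun_prop
    · simp only [Function.uncurry, norm_mul, Complex.norm_real, Real.norm_eq_abs]
      rw [Complex.norm_exp]
      simp
  have h1 : ft d (bes d a) ξ = ∫ x : Vd d, ∫ t in Set.Ioi (0 : ℝ),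
      Complex.exp (-Complex.I * (∑ i, (x i : ℂ) * (ξ i : ℂ))) * ((gw d t * hk d a t x : ℝ) : ℂ) := by
    unfold ft
    congr 1; ext x
    rw [integral_const_mul, bes, integral_complex_ofReal]
  rw [h1, ← integral_integral_swap hInt2, ← Complex.ofReal_inv,
    ← integral_gw_exp d (by positivity), ← integral_complex_ofReal]
  refine setIntegral_congr_fun measurableSet_Ioi fun t ht => ?_
  have h2 := ft_hk d ha ht ξ
  rw [Complex.ofReal_mul, ← h2, ft, ← integral_const_mul]
  congr 1; ext x
  push_cast; ring

/-- The characteristic functional of the measure with density `f` is the Fourier transform `ft`,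
read at minus the coordinates of `L` because `ft` carries the sign `e^{-i⟨x,ξ⟩}`. -/
lemma ft_eq_charFunDual (d : ℕ) (f : Vd d → ℝ) (hf : Measurable f) (h0 : ∀ x, 0 ≤ f x)
    (L : StrongDual ℝ (Vd d)) :
    charFunDual (volume.withDensity fun x => ENNReal.ofReal (f x)) L
      = ft d f (fun i => -L (Pi.single i 1)) := by
  rw [charFunDual_apply, integral_withDensity_eq_integral_toReal_smul (by fun_prop) (by simp), ft]
  congr 1; ext x
  have hL : L x = ∑ i, x i * L (Pi.single i 1) := by
    conv_lhs => rw [← Finset.univ_sum_single x]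
    rw [map_sum]
    refine Finset.sum_congr rfl fun i _ => ?_
    rw [← smul_eq_mul, ← map_smul, ← Pi.single_smul, smul_eq_mul, mul_one]
  rw [ENNReal.toReal_ofReal (h0 x), Complex.real_smul, mul_comm, hL]
  congr 2
  push_cast
  rw [Finset.sum_mul, Finset.mul_sum]
  exact Finset.sum_congr rfl fun i _ => by ring

/-- Injectivity of the Fourier transform on nonnegative integrable functions. -/
lemma ae_eq_of_ft_eq (d : ℕ) (f g : Vd d → ℝ) (hf : Integrable f) (hg : Integrable g)
    (hf0 : ∀ x, 0 ≤ f x) (hg0 : ∀ x, 0 ≤ g x) (h : ft d f = ft d g) : f =ᵐ[volume] g := by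
  -- Nonnegative measurable representatives, so that the densities are measurable everywhere.
  have key : ∀ f : Vd d → ℝ, Integrable f → (∀ x, 0 ≤ f x) → ∃ f' : Vd d → ℝ,
      Measurable f' ∧ Integrable f' ∧ (∀ x, 0 ≤ f' x) ∧ f =ᵐ[volume] f' ∧ ft d f' = ft d f := by
    intro f hf hf0
    obtain ⟨f1, hm, he⟩ := hf.aestronglyMeasurable
    have he2 : f =ᵐ[volume] fun x => max (f1 x) 0 := by
      filter_upwards [he] with x hx
      rw [← hx, max_eq_left (hf0 x)]
    refine ⟨fun x => max (f1 x) 0, hm.measurable.max measurable_const, hf.congr he2,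
      fun x => le_max_right _ _, he2, ?_⟩
    ext ξ
    refine integral_congr_ae ?_
    filter_upwards [he2] with x hx
    rw [hx]
  obtain ⟨f', mf, If, f0, ef, tf⟩ := key f hf hf0
  obtain ⟨g', mg, Ig, g0, eg, tg⟩ := key g hg hg0
  have fin : ∀ f : Vd d → ℝ, Integrable f →
      IsFiniteMeasure (volume.withDensity fun x => ENNReal.ofReal (f x)) := fun f hf =>
    isFiniteMeasure_withDensity_ofReal hf.2
  have := fin f' If
  have := fin g' Ig
  have hm : (volume.withDensity fun x => ENNReal.ofReal (f' x))
      = volume.withDensity fun x => ENNReal.ofReal (g' x) := by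
    apply Measure.ext_of_charFunDual
    ext L
    rw [ft_eq_charFunDual d f' mf f0, ft_eq_charFunDual d g' mg g0, tf, tg, h]
  rw [withDensity_eq_iff (by fun_prop) (by fun_prop) If.lintegral_lt_top.ne] at hm
  filter_upwards [ef, eg, hm] with x h1 h2 h3
  rw [h1, h2]
  rwa [ENNReal.ofReal_eq_ofReal_iff (f0 x) (g0 x)] at h3

/-! ### Decay of the Bessel kernel -/

/-- Gaussian tails are weakened to `(1+x²)⁻¹` by `e^{-u} ≤ (1+u)⁻¹`; the powers of `t` that this
costs are absorbed by the weight `gw`. -/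
lemma gpdf_le {a t : ℝ} (ha : 0 < a) (ha1 : a ≤ 1) (ht : 0 < t) (x : ℝ) :
    ProbabilityTheory.gaussianPDFReal 0 (Real.toNNReal (2 * t * a ^ 2)) x
      ≤ a⁻¹ * ((√t)⁻¹ * (1 + 4 * t)) * (1 + x ^ 2)⁻¹ := by
  rw [ProbabilityTheory.gaussianPDFReal, Real.coe_toNNReal _ (by positivity)]
  have h1 : (√(2 * Real.pi * (2 * t * a ^ 2)))⁻¹ ≤ a⁻¹ * (√t)⁻¹ := by
    rw [← mul_inv]
    apply inv_anti₀ (by positivity)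
    apply Real.le_sqrt_of_sq_le
    rw [mul_pow, Real.sq_sqrt ht.le]
    have := Real.pi_gt_three
    have : 0 < t * a ^ 2 := by positivity
    nlinarith
  have h2 : Real.exp (-(x - 0) ^ 2 / (2 * (2 * t * a ^ 2))) ≤ (1 + 4 * t) * (1 + x ^ 2)⁻¹ := by
    have hu := Real.add_one_le_exp (x ^ 2 / (4 * t * a ^ 2))
    rw [show -(x - 0) ^ 2 / (2 * (2 * t * a ^ 2)) = -(x ^ 2 / (4 * t * a ^ 2)) by ring,
      Real.exp_neg]
    refine (inv_anti₀ (by positivity) hu).trans ?_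
    rw [← div_eq_mul_inv, inv_eq_one_div, div_le_div_iff₀ (by positivity) (by positivity)]
    have ha2 : a ^ 2 ≤ 1 := pow_le_one₀ ha.le ha1
    have h3 : x ^ 2 ≤ x ^ 2 / a ^ 2 := le_div_self (by positivity) (by positivity) ha2
    have h4 : x ^ 2 / (4 * t * a ^ 2) * (4 * t) = x ^ 2 / a ^ 2 := by field_simp
    have h5 : 0 ≤ x ^ 2 / (4 * t * a ^ 2) := by positivity
    nlinarith
  calc _ ≤ (a⁻¹ * (√t)⁻¹) * ((1 + 4 * t) * (1 + x ^ 2)⁻¹) := by gcongr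
    _ = _ := by ring

/-- The constant in the pointwise bound of the Bessel kernel. -/
def cb (d : ℕ) : ℝ := 8 ^ (2 * d + 1) * (2 * d + 1).factorial * Real.exp (1 / 8)

lemma weight_le (d : ℕ) {t : ℝ} (ht : 0 < t) :
    gw d t * ((√t)⁻¹ * (1 + 4 * t)) ^ d ≤ cb d * Real.exp (-(1 / 2) * t) := by
  -- Of the factor `t^{d+1}`, `d` powers of `t` cancel the singularity of `(√t)^{-d}` at `0`.
  have h1 : t * ((√t)⁻¹ * (1 + 4 * t)) ≤ (1 + 4 * t) ^ 2 := by
    have hs : 0 < √t := Real.sqrt_pos.2 ht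
    have hs2 : √t ^ 2 = t := Real.sq_sqrt ht.le
    have : t * (√t)⁻¹ = √t := by
      rw [← div_eq_mul_inv, Real.div_sqrt]
    rw [← mul_assoc, this]
    nlinarith [sq_nonneg (√t - 1)]
  have h2 : gw d t * ((√t)⁻¹ * (1 + 4 * t)) ^ d ≤ (1 + 4 * t) ^ (2 * d + 1) * Real.exp (-t) := by
    have hf : (1 : ℝ) ≤ (d + 1).factorial := by exact_mod_cast (d + 1).factorial_pos
    calc gw d t * ((√t)⁻¹ * (1 + 4 * t)) ^ d
        = (t * ((√t)⁻¹ * (1 + 4 * t))) ^ d * t * Real.exp (-t) / (d + 1).factorial := by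
          unfold gw; rw [mul_pow t]; ring
      _ ≤ (t * ((√t)⁻¹ * (1 + 4 * t))) ^ d * t * Real.exp (-t) := div_le_self (by positivity) hf
      _ ≤ ((1 + 4 * t) ^ 2) ^ d * (1 + 4 * t) * Real.exp (-t) := by
          gcongr; linarith
      _ = _ := by rw [← pow_mul, ← pow_succ]
  -- The divisor `8` turns `1 + 4t` into `1/8 + t/2`, which leaves half of the decay of `e^{-t}`.
  have h3 := Real.pow_div_factorial_le_exp ((1 + 4 * t) / 8) (by positivity) (2 * d + 1)
  rw [div_le_iff₀ (by positivity), div_pow, div_le_iff₀ (by positivity)] at h3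
  calc _ ≤ _ := h2
    _ ≤ (Real.exp ((1 + 4 * t) / 8) * (2 * d + 1).factorial * 8 ^ (2 * d + 1)) * Real.exp (-t) := by
      gcongr
    _ = _ := by
      unfold cb
      rw [show (1 + 4 * t) / 8 = 1 / 8 + t / 2 by ring, Real.exp_add,
        show -(1 / 2) * t = t / 2 + -t by ring, Real.exp_add]
      ring

/-- Pointwise decay of the Bessel kernel at scale `a ≤ 1`. -/
lemma bes_le (d : ℕ) {a : ℝ} (ha : 0 < a) (ha1 : a ≤ 1) (x : Vd d) :
    bes d a x ≤ 2 * cb d * (a⁻¹) ^ d * beta d x := by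
  have hb : 0 ≤ beta d x := Finset.prod_nonneg fun _ _ => by positivity
  have hInt : IntegrableOn
      (fun t => (cb d * (a⁻¹) ^ d * beta d x) * Real.exp (-(1 / 2) * t)) (Set.Ioi 0) :=
    (exp_neg_integrableOn_Ioi 0 (by norm_num : (0 : ℝ) < 1 / 2)).const_mul _
  calc bes d a x ≤ ∫ t in Set.Ioi (0 : ℝ),
        (cb d * (a⁻¹) ^ d * beta d x) * Real.exp (-(1 / 2) * t) := by
        refine integral_mono_of_nonneg ?_ hInt ?_
        · filter_upwards [ae_restrict_mem measurableSet_Ioi] with t ht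
          exact mul_nonneg (gw_nonneg d ht) (hk_nonneg d a _ x)
        · filter_upwards [ae_restrict_mem measurableSet_Ioi] with t ht
          have ht' : 0 < t := ht
          have h1 : hk d a t x ≤ ((a⁻¹) * ((√t)⁻¹ * (1 + 4 * t))) ^ d * beta d x := by
            calc hk d a t x ≤ ∏ i, (a⁻¹ * ((√t)⁻¹ * (1 + 4 * t)) * (1 + x i ^ 2)⁻¹) :=
                  Finset.prod_le_prod (fun _ _ => gpdf_nonneg _ _)
                    fun i _ => gpdf_le ha ha1 ht' (x i)
              _ = _ := by rw [Finset.prod_mul_distrib]; simp [beta]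
          calc gw d t * hk d a t x
              ≤ gw d t * (((a⁻¹) * ((√t)⁻¹ * (1 + 4 * t))) ^ d * beta d x) :=
                mul_le_mul_of_nonneg_left h1 (gw_nonneg d ht')
            _ = (gw d t * ((√t)⁻¹ * (1 + 4 * t)) ^ d) * ((a⁻¹) ^ d * beta d x) := by
                rw [mul_pow]; ring
            _ ≤ (cb d * Real.exp (-(1 / 2) * t)) * ((a⁻¹) ^ d * beta d x) :=
                mul_le_mul_of_nonneg_right (weight_le d ht') (by positivity)
            _ = _ := by ring
    _ = _ := by
      rw [integral_const_mul, integral_exp_mul_Ioi (by norm_num)]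
      simp; ring

/-! ### Periodization -/

lemma tsum_pi_prod_le {ι α : Type*} [Fintype ι] (f : ι → α → ℝ≥0∞) :
    ∑' k : ι → α, ∏ i, f i (k i) ≤ ∏ i, ∑' a, f i a := by
  classical
  rw [ENNReal.tsum_eq_iSup_sum]
  refine iSup_le fun s => ?_
  calc ∑ k ∈ s, ∏ i, f i (k i)
      ≤ ∑ k ∈ Fintype.piFinset fun i => s.image fun k => k i, ∏ i, f i (k i) := by
        refine Finset.sum_le_sum_of_subset fun k hk => ?_
        rw [Fintype.mem_piFinset]
        exact fun i => Finset.mem_image_of_mem _ hk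
    _ = ∏ i, ∑ a ∈ s.image fun k => k i, f i a := (Finset.prod_univ_sum _ _).symm
    _ ≤ _ := Finset.prod_le_prod' fun i _ => ENNReal.sum_le_tsum _

/-- The periodization of `(1+x²)⁻¹` is bounded. -/
lemma exists_periodization_bound : ∃ c : ℝ, 0 < c ∧ ∀ x : ℝ,
    ∑' k : ℤ, ENNReal.ofReal (1 + (x - 2 * Real.pi * k) ^ 2)⁻¹ ≤ ENNReal.ofReal c := by
  have hs0 : Summable fun k : ℤ => 1 / (k : ℝ) ^ 2 := Real.summable_one_div_int_pow.2 one_lt_two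
  have hs1 : Summable fun k : ℤ => if k = 0 then (1 : ℝ) else 0 :=
    summable_of_hasFiniteSupport ((Set.finite_singleton (0 : ℤ)).subset fun k hk => by
      by_contra h; simp_all)
  have hs := hs1.add hs0
  refine ⟨(∑' k : ℤ, ((if k = 0 then (1 : ℝ) else 0) + 1 / (k : ℝ) ^ 2)) + 1, ?_, fun x => ?_⟩
  · have : 0 ≤ ∑' k : ℤ, ((if k = 0 then (1 : ℝ) else 0) + 1 / (k : ℝ) ^ 2) :=
      tsum_nonneg fun k => by positivity
    linarith
  -- By periodicity in `x` it is enough to treat the representative in `[-π,π)`, for which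
  -- `|x - 2πk| ≥ |k|`.
  · obtain ⟨n, ⟨hn1, hn2⟩, -⟩ :=
      existsUnique_add_zsmul_mem_Ico (a := 2 * Real.pi) (by positivity) x (-Real.pi)
    rw [zsmul_eq_mul] at hn1 hn2
    rw [← (Equiv.subRight n).tsum_eq]
    calc ∑' k : ℤ, ENNReal.ofReal (1 + (x - 2 * Real.pi * ((Equiv.subRight n) k : ℤ)) ^ 2)⁻¹
        ≤ ∑' k : ℤ, ENNReal.ofReal ((if k = 0 then (1 : ℝ) else 0) + 1 / (k : ℝ) ^ 2) := by
          refine ENNReal.tsum_le_tsum fun k => ENNReal.ofReal_le_ofReal ?_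
          set y := x + n * (2 * Real.pi) with hy
          have e : x - 2 * Real.pi * ((Equiv.subRight n) k : ℤ) = y - 2 * Real.pi * k := by
            simp [hy]; ring
          rw [e]
          split_ifs with hk
          · simp only [hk]
            have : (1 + (y - 2 * Real.pi * ((0 : ℤ) : ℝ)) ^ 2)⁻¹ ≤ 1 :=
              inv_le_one_of_one_le₀ (by nlinarith [sq_nonneg (y - 2 * Real.pi * ((0 : ℤ) : ℝ))])
            simpa using this
          · rw [zero_add, one_div]
            have hk2 : (1 : ℝ) ≤ |(k : ℝ)| := by exact_mod_cast Int.one_le_abs hk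
            have hp := Real.pi_gt_three
            apply inv_anti₀ (by positivity)
            have hy2 : |y| ≤ Real.pi := abs_le.2 ⟨hn1, by linarith⟩
            have h3 : |(k : ℝ)| ≤ |y - 2 * Real.pi * k| := by
              have h4 : |2 * Real.pi * (k : ℝ)| - |y| ≤ |y - 2 * Real.pi * k| := by
                rw [abs_sub_comm]; exact abs_sub_abs_le_abs_sub _ _
              rw [abs_mul, abs_of_pos (by positivity : 0 < 2 * Real.pi)] at h4
              nlinarith
            have := sq_le_sq.2 h3
            linarith
      _ = ENNReal.ofReal (∑' k : ℤ, ((if k = 0 then (1 : ℝ) else 0) + 1 / (k : ℝ) ^ 2)) :=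
          (ENNReal.ofReal_tsum_of_nonneg (fun k => by positivity) hs).symm
      _ ≤ _ := ENNReal.ofReal_le_ofReal (by linarith)

/-- The vector `2πk` of the lattice of periods. -/
def lat {n d : ℕ} (k : Fin n → Fin d → ℤ) : Fin n → Vd d := fun j i => 2 * Real.pi * k j i

/-- Unfolding an integral against a periodic function `h` to the fundamental domain. -/
lemma unfold_le {n d : ℕ} (f h : (Fin n → Vd d) → ℝ≥0∞) (hf : Measurable f) (hh : Measurable h)
    (per : ∀ k x, h (x + lat k) = h x) :
    ∫⁻ x, f x * h x
      ≤ ∫⁻ x in Set.univ.pi fun _ : Fin n => fundDom d, (∑' k, f (x + lat k)) * h x := by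
  set F : Set (Fin n → Vd d) := Set.univ.pi fun _ : Fin n => fundDom d with hF
  have mF : MeasurableSet F := MeasurableSet.univ_pi fun _ =>
    MeasurableSet.univ_pi fun _ => measurableSet_Ico
  -- The translates of the fundamental domain cover the space; disjointness is not needed.
  have cover : (⋃ k : Fin n → Fin d → ℤ, (fun x => x - lat k) ⁻¹' F) = Set.univ := by
    refine Set.eq_univ_of_forall fun x => ?_
    have : ∀ j i, ∃ m : ℤ, x j i + m • (2 * Real.pi) ∈
        Set.Ico (-Real.pi) (-Real.pi + 2 * Real.pi) := fun j i =>
      (existsUnique_add_zsmul_mem_Ico (by positivity) (x j i) (-Real.pi)).exists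
    choose m hm using this
    refine Set.mem_iUnion.2 ⟨fun j i => -m j i, ?_⟩
    simp only [Set.mem_preimage, hF, fundDom, Set.mem_univ_pi]
    intro j i
    have := hm j i
    rw [zsmul_eq_mul] at this
    simp only [Pi.sub_apply, lat, Set.mem_Ico] at this ⊢
    push_cast
    constructor <;> linarith [this.1, this.2]
  calc ∫⁻ x, f x * h x
      = ∫⁻ x in ⋃ k : Fin n → Fin d → ℤ, (fun x => x - lat k) ⁻¹' F, f x * h x := by
        rw [cover, Measure.restrict_univ]
    _ ≤ ∑' k : Fin n → Fin d → ℤ, ∫⁻ x in (fun x => x - lat k) ⁻¹' F, f x * h x :=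
        lintegral_iUnion_le _ _
    _ = ∑' k : Fin n → Fin d → ℤ, ∫⁻ x in F, f (x + lat k) * h x := by
        refine tsum_congr fun k => ?_
        have hm := measurePreserving_sub_right (volume : Measure (Fin n → Vd d)) (lat k)
        have := hm.setLIntegral_comp_preimage mF (f := fun x => f (x + lat k) * h x)
          (by fun_prop)
        rw [← this]
        refine lintegral_congr fun x => ?_
        simp only [sub_add_cancel]
        rw [← per k (x - lat k), sub_add_cancel]
    _ = _ := by
        rw [← lintegral_tsum fun k => by fun_prop]
        simp_rw [ENNReal.tsum_mul_right]

/-! ### Kernels in `𝒱_t` -/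

/-- The fibre integral of `|V|` over the `y`-variables. -/
def fib {d n' m : ℕ} (V : (Fin (n' + 1) → Vd d) → (Fin m → Vd d) → ℝ)
    (x : Fin (n' + 1) → Vd d) : ℝ≥0∞ := ∫⁻ y, ‖V x y‖ₑ

lemma measurable_fib {d n' m : ℕ} {g : Fin m → Fin (n' + 1)}
    {V : (Fin (n' + 1) → Vd d) → (Fin m → Vd d) → ℝ} (hV : IsVt d n' m g V) :
    Measurable (fib V) :=
  hV.continuous.measurable.enorm.lintegral_prod_right'

/-- Adding `2π` to one coordinate of `x` does not change the fibre integral, since the shift of the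
`y`-variables that accompanies it preserves Lebesgue measure. -/
lemma fib_step {d n' m : ℕ} {g : Fin m → Fin (n' + 1)}
    {V : (Fin (n' + 1) → Vd d) → (Fin m → Vd d) → ℝ} (hV : IsVt d n' m g V)
    (x : Fin (n' + 1) → Vd d) (q : Fin (n' + 1)) (i : Fin d) :
    fib V (x + Pi.single q (Pi.single i (2 * Real.pi))) = fib V x := by
  have e : x + Pi.single q (Pi.single i (2 * Real.pi))
      = Function.update x q (x q + Pi.single i (2 * Real.pi)) := by
    ext j l
    rcases eq_or_ne j q with rfl | h
    · simp
    · simp [h]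
  rw [e]
  unfold fib
  -- Shifting each `y t` by `x (g t)` brings both integrals to the form of the periodicity condition.
  rw [← lintegral_add_right_eq_self _ (fun t =>
      (Function.update x q (x q + Pi.single i (2 * Real.pi))) (g t)),
    ← lintegral_add_right_eq_self (fun y => ‖V x y‖ₑ) (fun t => x (g t))]
  exact lintegral_congr fun y => congrArg _ (hV.periodic x y q i)

lemma fib_lat {d n' m : ℕ} {g : Fin m → Fin (n' + 1)}
    {V : (Fin (n' + 1) → Vd d) → (Fin m → Vd d) → ℝ} (hV : IsVt d n' m g V)
    (k : Fin (n' + 1) → Fin d → ℤ) (x : Fin (n' + 1) → Vd d) :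
    fib V (x + lat k) = fib V x := by
  let P : AddSubgroup (Fin (n' + 1) → Vd d) :=
    { carrier := {v | ∀ x, fib V (x + v) = fib V x}
      zero_mem' := fun x => by rw [add_zero]
      add_mem' := fun {a b} ha hb x => by rw [← add_assoc, hb, ha]
      neg_mem' := fun {a} ha x => by rw [← ha (x + -a), neg_add_cancel_right] }
  have h : lat k ∈ P := by
    have e : lat k = ∑ q, ∑ i, k q i •
        (Pi.single q (Pi.single i (2 * Real.pi)) : Fin (n' + 1) → Vd d) := by
      ext j l
      simp [lat, Finset.sum_apply, Pi.single_apply, apply_ite, ite_apply, mul_comm]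
    rw [e]
    exact P.sum_mem fun q _ => P.sum_mem fun i _ => P.zsmul_mem (fun x => fib_step hV x q i) _
  exact h x

/-- The norm controls the fibre integrals, integrated over the fundamental domain. -/
lemma setLIntegral_fib_le {d n' m : ℕ} {g : Fin m → Fin (n' + 1)}
    {V : (Fin (n' + 1) → Vd d) → (Fin m → Vd d) → ℝ} (hV : IsVt d n' m g V) (x₁ : Vd d) :
    ∫⁻ p in Set.univ.pi fun _ : Fin n' => fundDom d, fib V (Fin.cons x₁ p)
      ≤ ENNReal.ofReal (vtNorm d n' m V) := by
  have h1 := le_ciSup hV.bdd x₁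
  refine le_trans (le_of_eq ?_) (ENNReal.ofReal_le_ofReal h1)
  have h2 := ofReal_integral_norm_eq_lintegral_enorm (hV.integrable x₁)
  simp only [Real.norm_eq_abs] at h2
  have hc : Continuous fun p : (Fin n' → Vd d) × (Fin m → Vd d) =>
      V (Fin.cons x₁ p.1) p.2 :=
    hV.continuous.comp (f := fun p : (Fin n' → Vd d) × (Fin m → Vd d) =>
      ((Fin.cons x₁ p.1 : Fin (n' + 1) → Vd d), p.2)) (by fun_prop)
  rw [h2, Measure.volume_eq_prod, setLIntegral_prod _ hc.measurable.enorm.aemeasurable]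
  simp [fib]

/-- The estimate for a measurable kernel `k` of mass at most one dominated by `A·β`: one factor
`k` is integrated, `n'` factors are periodized and `m` factors are estimated by their
supremum. -/
lemma core_bound {d n' m : ℕ} {g : Fin m → Fin (n' + 1)}
    {V : (Fin (n' + 1) → Vd d) → (Fin m → Vd d) → ℝ} (hV : IsVt d n' m g V)
    (A c : ℝ≥0∞) (k : Vd d → ℝ≥0∞) (hk : Measurable k)
    (hkA : ∀ z, k z ≤ A * ENNReal.ofReal (beta d z)) (hk1 : ∫⁻ z, k z ≤ 1)
    (hc : ∀ x : ℝ, ∑' l : ℤ, ENNReal.ofReal (1 + (x - 2 * Real.pi * l) ^ 2)⁻¹ ≤ c)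
    (x : Fin (n' + 1) → Vd d) (y : Fin m → Vd d) :
    ∫⁻ p : (Fin (n' + 1) → Vd d) × (Fin m → Vd d),
      (∏ j, k (x j - p.1 j)) * (∏ t, k (y t - p.2 t)) * ‖V p.1 p.2‖ₑ
      ≤ A ^ m * ((A * c ^ d) ^ n' * ENNReal.ofReal (vtNorm d n' m V)) := by
  have hkA' : ∀ z, k z ≤ A := fun z => by
    refine (hkA z).trans ?_
    have : beta d z ≤ 1 := Finset.prod_le_one (fun _ _ => by positivity) fun i _ =>
      inv_le_one_of_one_le₀ (by nlinarith [sq_nonneg (z i)])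
    calc _ ≤ A * 1 := by gcongr; exact ENNReal.ofReal_le_one.2 this
      _ = A := mul_one A
  have mfib := measurable_fib hV
  have mV : Measurable fun p : (Fin (n' + 1) → Vd d) × (Fin m → Vd d) => ‖V p.1 p.2‖ₑ :=
    hV.continuous.measurable.enorm
  have mcons : Measurable fun q : Vd d × (Fin n' → Vd d) =>
      (Fin.cons q.1 q.2 : Fin (n' + 1) → Vd d) := by
    refine Continuous.measurable ?_
    fun_prop
  -- The periodization of one factor of the kernel.
  have hper : ∀ z : Vd d, ∑' l : Fin d → ℤ, k (fun i => z i - 2 * Real.pi * l i)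
      ≤ A * c ^ d := by
    intro z
    calc ∑' l : Fin d → ℤ, k (fun i => z i - 2 * Real.pi * l i)
        ≤ ∑' l : Fin d → ℤ,
          A * ∏ i, ENNReal.ofReal (1 + (z i - 2 * Real.pi * l i) ^ 2)⁻¹ := by
          refine ENNReal.tsum_le_tsum fun l => (hkA _).trans ?_
          rw [beta, ENNReal.ofReal_prod_of_nonneg fun _ _ => by positivity]
      _ ≤ A * ∏ i, ∑' l : ℤ, ENNReal.ofReal (1 + (z i - 2 * Real.pi * l) ^ 2)⁻¹ := by
          rw [ENNReal.tsum_mul_left]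
          gcongr
          exact tsum_pi_prod_le fun i (l : ℤ) =>
            ENNReal.ofReal (1 + (z i - 2 * Real.pi * l) ^ 2)⁻¹
      _ ≤ A * ∏ i : Fin d, c := by
          gcongr with i
          exact hc (z i)
      _ = _ := by simp
  have hinner : ∀ p₀ : Vd d, ∫⁻ p : Fin n' → Vd d,
      (∏ j, k (x (Fin.succ j) - p j)) * fib V (Fin.cons p₀ p)
      ≤ (A * c ^ d) ^ n' * ENNReal.ofReal (vtNorm d n' m V) := by
    intro p₀
    have mh : Measurable fun p : Fin n' → Vd d => fib V (Fin.cons p₀ p) :=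
      mfib.comp (mcons.comp (measurable_const.prodMk measurable_id))
    refine (unfold_le _ _ (by fun_prop) mh fun l p => ?_).trans ?_
    · have e : (Fin.cons p₀ (p + lat l) : Fin (n' + 1) → Vd d)
          = Fin.cons p₀ p + lat (Fin.cons 0 l) := by
        ext j i
        refine Fin.cases ?_ (fun j => ?_) j <;> simp [lat]
      rw [e, fib_lat hV]
    · calc _ ≤ ∫⁻ p in Set.univ.pi fun _ : Fin n' => fundDom d,
            (A * c ^ d) ^ n' * fib V (Fin.cons p₀ p) := by
            refine lintegral_mono fun p => ?_
            gcongr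
            calc _ ≤ ∏ j, ∑' l : Fin d → ℤ,
                  k (fun i => (x (Fin.succ j) - p j) i - 2 * Real.pi * l i) := by
                  refine le_trans (le_of_eq ?_) (tsum_pi_prod_le fun j (l : Fin d → ℤ) =>
                    k (fun i => (x (Fin.succ j) - p j) i - 2 * Real.pi * l i))
                  refine tsum_congr fun l => Finset.prod_congr rfl fun j _ => ?_
                  congr 1; ext i; simp [lat]; ring
              _ ≤ ∏ j : Fin n', A * c ^ d := Finset.prod_le_prod' fun j _ => hper _
              _ = _ := by simp
        _ ≤ _ := by
            rw [lintegral_const_mul _ mh]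
            gcongr
            exact setLIntegral_fib_le hV p₀
  have hprod : ∀ p : Fin (n' + 1) → Vd d, Measurable fun q : Fin m → Vd d => ‖V p q‖ₑ :=
    fun p => mV.comp (measurable_const.prodMk measurable_id)
  calc _ ≤ ∫⁻ p : (Fin (n' + 1) → Vd d) × (Fin m → Vd d),
        A ^ m * ((∏ j, k (x j - p.1 j)) * ‖V p.1 p.2‖ₑ) := by
        refine lintegral_mono fun p => ?_
        have : ∏ t, k (y t - p.2 t) ≤ A ^ m := by
          calc _ ≤ ∏ t : Fin m, A := Finset.prod_le_prod' fun t _ => hkA' _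
            _ = _ := by simp
        calc _ ≤ (∏ j, k (x j - p.1 j)) * A ^ m * ‖V p.1 p.2‖ₑ := by gcongr
          _ = _ := by ring
    _ = A ^ m * ∫⁻ p : Fin (n' + 1) → Vd d, (∏ j, k (x j - p j)) * fib V p := by
        rw [lintegral_const_mul _ (by fun_prop), Measure.volume_eq_prod,
          lintegral_prod _ (by fun_prop)]
        congr 1
        refine lintegral_congr fun p => ?_
        exact lintegral_const_mul (μ := volume) (∏ j, k (x j - p j)) (hprod p)
    _ = A ^ m * ∫⁻ p₀ : Vd d, k (x 0 - p₀) * ∫⁻ p : Fin n' → Vd d,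
          (∏ j, k (x (Fin.succ j) - p j)) * fib V (Fin.cons p₀ p) := by
        congr 1
        have hm := (volume_preserving_piFinSuccAbove (fun _ : Fin (n' + 1) => Vd d) 0).symm
        rw [← hm.lintegral_comp (by fun_prop), Measure.volume_eq_prod, lintegral_prod]
        · refine lintegral_congr fun p₀ => ?_
          rw [← lintegral_const_mul]
          · refine lintegral_congr fun p => ?_
            simp [MeasurableEquiv.piFinSuccAbove_symm_apply, Fin.prod_univ_succ, mul_assoc,
              Fin.consEquiv]
          · exact Measurable.mul (by fun_prop)
              (mfib.comp (mcons.comp (measurable_const.prodMk measurable_id)))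
        · refine Measurable.aemeasurable ?_
          have := (MeasurableEquiv.piFinSuccAbove (fun _ : Fin (n' + 1) => Vd d) 0).symm.measurable
          fun_prop
    _ ≤ A ^ m * ∫⁻ p₀ : Vd d, k (x 0 - p₀) *
          ((A * c ^ d) ^ n' * ENNReal.ofReal (vtNorm d n' m V)) := by
        gcongr with p₀
        exact hinner p₀
    _ ≤ _ := by
        rw [lintegral_mul_const _ (by fun_prop), lintegral_sub_left_eq_self k (x 0)]
        refine mul_le_mul_right ?_ _
        exact (mul_le_mul_left hk1 _).trans_eq (one_mul _)

/-! ### The sup-norm bound -/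

/-- A measurable kernel of mass at most one that dominates `K_μ` almost everywhere and satisfies the
pointwise decay bound everywhere. -/
lemma exists_dominating {d : ℕ} {σ : ℝ} (hσ : 0 < σ) {K : ℝ → Vd d → ℝ} (hK : IsBessel d σ K)
    {μ : ℝ} (hμ : μ ∈ Set.Ioc (0 : ℝ) 1) :
    ∃ k : Vd d → ℝ≥0∞, Measurable k ∧
      (∀ z, k z ≤ ENNReal.ofReal (2 * cb d * ((μ ^ (1 / σ))⁻¹) ^ d) * ENNReal.ofReal (beta d z)) ∧
      ∫⁻ z, k z ≤ 1 ∧ ∀ᵐ z, ‖K μ z‖ₑ ≤ k z := by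
  obtain ⟨h0, hInt, h1, hft⟩ := hK μ hμ
  have ha : 0 < μ ^ (1 / σ) := Real.rpow_pos_of_pos hμ.1 _
  have ha1 : μ ^ (1 / σ) ≤ 1 := Real.rpow_le_one hμ.1.le hμ.2 (by positivity)
  have hKb : K μ =ᵐ[volume] bes d (μ ^ (1 / σ)) :=
    ae_eq_of_ft_eq d _ _ hInt (integrable_bes d ha) h0 (bes_nonneg d _)
      (funext fun ξ => by rw [hft, ft_bes d ha])
  obtain ⟨K1, hK1, hKK⟩ := hInt.aestronglyMeasurable
  have mK1 := hK1.measurable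
  have hcb : 0 ≤ cb d := by unfold cb; positivity
  refine ⟨fun z => min (ENNReal.ofReal (K1 z))
      (ENNReal.ofReal (2 * cb d * ((μ ^ (1 / σ))⁻¹) ^ d) * ENNReal.ofReal (beta d z)),
    ?_, fun z => min_le_right _ _, ?_, ?_⟩
  · unfold beta; fun_prop
  · calc _ ≤ ∫⁻ z, ENNReal.ofReal (K1 z) := lintegral_mono fun z => min_le_left _ _
      _ = ∫⁻ z, ENNReal.ofReal (K μ z) := lintegral_congr_ae (by
          filter_upwards [hKK] with z hz
          rw [hz])
      _ = ENNReal.ofReal (∫ z, K μ z) :=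
          (ofReal_integral_eq_lintegral_ofReal hInt (Filter.Eventually.of_forall h0)).symm
      _ ≤ 1 := by rw [h1, ENNReal.ofReal_one]
  · filter_upwards [hKK, hKb] with z hz hz2
    rw [Real.enorm_eq_ofReal (h0 z)]
    refine le_min (by rw [hz]) ?_
    rw [← ENNReal.ofReal_mul (by positivity), hz2]
    exact ENNReal.ofReal_le_ofReal (bes_le d ha ha1 z)

/-- Sup-norm bound for regularized translation-invariant kernels:
`‖K̃_μ^{⊗(n+m)} ∗ V‖_{L^∞} ≤ C·[μ]^{-d(n+m-1)}·‖V‖_{𝒱_t^𝕄}` (here the number of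
`x`-variables is `n = n'+1`, so `n+m-1 = n'+m`). -/
theorem stmt15 (d n' m : ℕ) (hd : 0 < d) (σ : ℝ) (hσ : 0 < σ)
    (K : ℝ → Vd d → ℝ) (hK : IsBessel d σ K) :
    ∃ C : ℝ, 0 < C ∧ ∀ μ ∈ Set.Ioc (0 : ℝ) 1,
      ∀ (g : Fin m → Fin (n' + 1)) (V : (Fin (n' + 1) → Vd d) → (Fin m → Vd d) → ℝ),
        IsVt d n' m g V →
        ∀ (x : Fin (n' + 1) → Vd d) (y : Fin m → Vd d),
          |convVt d n' m (K μ) V x y|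
            ≤ C * (μ ^ (1 / σ)) ^ (-((d : ℝ) * (n' + m))) * vtNorm d n' m V := by
  obtain ⟨c, hc0, hc⟩ := exists_periodization_bound
  have hcb : 0 < cb d := by unfold cb; positivity
  refine ⟨(2 * cb d) ^ m * (2 * cb d * c ^ d) ^ n', by positivity, ?_⟩
  intro μ hμ g V hV x y
  have ha : 0 < μ ^ (1 / σ) := Real.rpow_pos_of_pos hμ.1 _
  obtain ⟨k, hk, hkA, hk1, hkK⟩ := exists_dominating hσ hK hμ
  have hcore := core_bound hV _ _ k hk hkA hk1 hc x y
  have hN : 0 ≤ vtNorm d n' m V :=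
    Real.iSup_nonneg fun x₁ => integral_nonneg fun p => abs_nonneg _
  have hx : ∀ᵐ p : (Fin (n' + 1) → Vd d) × (Fin m → Vd d),
      ∀ j, ‖K μ (x j - p.1 j)‖ₑ ≤ k (x j - p.1 j) := by
    refine ae_all_iff.2 fun j => ?_
    exact ((quasiMeasurePreserving_sub_left volume (x j)).comp
      ((Measure.quasiMeasurePreserving_eval _ j).comp
        Measure.quasiMeasurePreserving_fst)).ae hkK
  have hy : ∀ᵐ p : (Fin (n' + 1) → Vd d) × (Fin m → Vd d),
      ∀ t, ‖K μ (y t - p.2 t)‖ₑ ≤ k (y t - p.2 t) := by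
    refine ae_all_iff.2 fun t => ?_
    exact ((quasiMeasurePreserving_sub_left volume (y t)).comp
      ((Measure.quasiMeasurePreserving_eval _ t).comp
        Measure.quasiMeasurePreserving_snd)).ae hkK
  have hle : ‖convVt d n' m (K μ) V x y‖ₑ ≤ ENNReal.ofReal
      ((2 * cb d * ((μ ^ (1 / σ))⁻¹) ^ d) ^ m *
        ((2 * cb d * ((μ ^ (1 / σ))⁻¹) ^ d * c ^ d) ^ n' * vtNorm d n' m V)) := by
    rw [ENNReal.ofReal_mul (by positivity), ENNReal.ofReal_mul (by positivity),
      ENNReal.ofReal_pow (by positivity), ENNReal.ofReal_pow (by positivity),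
      ENNReal.ofReal_mul (q := c ^ d) (by positivity), ENNReal.ofReal_pow hc0.le]
    refine (enorm_integral_le_lintegral_enorm _).trans (le_trans (lintegral_mono_ae ?_) hcore)
    filter_upwards [hx, hy] with p h1 h2
    have e : ∀ {ι : Type} [Fintype ι] (f : ι → ℝ), ‖∏ i, f i‖ₑ = ∏ i, ‖f i‖ₑ := by
      intro ι _ f
      simp only [Real.enorm_eq_ofReal_abs, Finset.abs_prod]
      exact ENNReal.ofReal_prod_of_nonneg fun _ _ => abs_nonneg _
    rw [enorm_mul, enorm_mul, e, e]
    gcongr with j _ t _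
    · exact h1 j
    · exact h2 t
  rw [Real.enorm_eq_ofReal_abs, ENNReal.ofReal_le_ofReal_iff (by positivity)] at hle
  refine hle.trans (le_of_eq ?_)
  rw [show -((d : ℝ) * (n' + m)) = -((d * (n' + m) : ℕ) : ℝ) by push_cast; ring,
    Real.rpow_neg ha.le, Real.rpow_natCast, ← inv_pow, pow_mul, pow_add]
  simp only [mul_pow]
  ring
end
end

section
/- Stability of the power counting under a small shift of the regularity parameter: Let d be a positive integer and σ∈(d/3, d/2]. For ε≥0 set α_ε:=σ−d/2−ε, γ_ε:=3σ−d−3ε and ρ_ε(i,m):=α_ε−σ−m·α_ε+i·γ_ε for i,m∈ℕ, and write ρ:=ρ₀. Then there exists ε_⋄∈(0,σ) such that for all ε∈(0,ε_⋄) and all i,m,l∈ℕ: if ρ(i,m)+l>0 then ρ_ε(i,m)+l>0. -/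
/-!
The shift changes `ρ(i,m) + l` by `ε (m - 1 - 3i)`. This is nonnegative when `m ≥ 1 + 3i`. Since
`γ₀ = 3σ - d > 0` and `α₀ = σ - d/2 ≤ 0`, the shifted quantity is also positive for every small
`ε > 0`, uniformly in the other indices, as soon as `i` or `l` is large: `i γ_ε ≥ i γ₀ / 2` or `l`
alone then beats `d/2 + ε`. Only finitely many triples `(i,m,l)` remain, and for each of them
positivity at `ε = 0` persists for small `ε` by continuity.
-/


/-- Stability of the power counting under a small shift of the
regularity parameter.  Here `ρ_ε(i,m) = (σ - d/2 - ε) - σ - m·(σ - d/2 - ε) + i·(3σ - d - 3ε)`. -/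
theorem stmt19 (d : ℕ) (hd : 0 < d) (σ : ℝ)
    (hσ1 : (d : ℝ) / 3 < σ) (hσ2 : σ ≤ (d : ℝ) / 2) :
    ∃ εd : ℝ, εd ∈ Set.Ioo (0 : ℝ) σ ∧
      ∀ ε ∈ Set.Ioo (0 : ℝ) εd, ∀ i m l : ℕ,
        0 < ((σ - (d : ℝ) / 2) - σ - (m : ℝ) * (σ - (d : ℝ) / 2)
              + (i : ℝ) * (3 * σ - (d : ℝ))) + (l : ℝ) →
        0 < ((σ - (d : ℝ) / 2 - ε) - σ - (m : ℝ) * (σ - (d : ℝ) / 2 - ε)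
              + (i : ℝ) * (3 * σ - (d : ℝ) - 3 * ε)) + (l : ℝ) := by
  have hdpos : (0 : ℝ) < d := by exact_mod_cast hd
  have hγ : 0 < 3 * σ - (d : ℝ) := by linarith
  -- From `i = N` on, `i γ₀ / 2` exceeds `d`.
  obtain ⟨N, hN⟩ := exists_nat_gt ((d : ℝ) / ((3 * σ - d) / 2))
  rw [div_lt_iff₀ (by linarith)] at hN
  have hfin : ∀ᶠ ε in nhds (0 : ℝ), ∀ i ∈ Finset.range N, ∀ m ∈ Finset.range (1 + 3 * N),
      ∀ l ∈ Finset.range d,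
        0 < ((σ - (d : ℝ) / 2) - σ - (m : ℝ) * (σ - (d : ℝ) / 2)
              + (i : ℝ) * (3 * σ - (d : ℝ))) + (l : ℝ) →
        0 < ((σ - (d : ℝ) / 2 - ε) - σ - (m : ℝ) * (σ - (d : ℝ) / 2 - ε)
              + (i : ℝ) * (3 * σ - (d : ℝ) - 3 * ε)) + (l : ℝ) := by
    simp only [Filter.eventually_all_finset, Filter.eventually_imp_distrib_left]
    intro i _ m _ l _ h
    have hc : Continuous fun ε : ℝ =>
        ((σ - (d : ℝ) / 2 - ε) - σ - (m : ℝ) * (σ - (d : ℝ) / 2 - ε)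
          + (i : ℝ) * (3 * σ - (d : ℝ) - 3 * ε)) + (l : ℝ) := by fun_prop
    exact hc.continuousAt.eventually (lt_mem_nhds (by simpa using h))
  obtain ⟨δ, hδ, hball⟩ := Metric.eventually_nhds_iff.mp hfin
  -- `ε < γ₀ / 6` gives `γ_ε > γ₀ / 2`, and `ε < d / 2` lets `d` absorb `d / 2 + ε`.
  refine ⟨min (min δ (σ / 2)) (min ((3 * σ - d) / 6) (d / 2)), ⟨?_, ?_⟩, ?_⟩
  · have : 0 < σ := by linarith
    have : 0 < (3 * σ - (d : ℝ)) / 6 := by linarith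
    positivity
  · have h1 := min_le_left (min δ (σ / 2)) (min ((3 * σ - (d : ℝ)) / 6) (d / 2))
    have h2 := min_le_right δ (σ / 2)
    linarith
  rintro ε ⟨hε0, hε⟩ i m l h
  simp only [lt_min_iff] at hε
  obtain ⟨⟨hεδ, -⟩, hεγ, hεd⟩ := hε
  have hi0 : (0 : ℝ) ≤ i := i.cast_nonneg
  have hl0 : (0 : ℝ) ≤ l := l.cast_nonneg
  have hm : 0 ≤ (m : ℝ) * ((d : ℝ) / 2 - σ + ε) := mul_nonneg m.cast_nonneg (by linarith)
  have hi : 0 ≤ (i : ℝ) * (3 * σ - d - 3 * ε - (3 * σ - d) / 2) :=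
    mul_nonneg hi0 (by linarith)
  have hi' : 0 ≤ (i : ℝ) * (3 * σ - d) := mul_nonneg hi0 hγ.le
  rcases le_or_gt N i with hNi | hNi
  · have : (N : ℝ) * ((3 * σ - d) / 2) ≤ i * ((3 * σ - d) / 2) :=
      mul_le_mul_of_nonneg_right (by exact_mod_cast hNi) (by linarith)
    linarith
  rcases le_or_gt (1 + 3 * i) m with hmi | hmi
  · have : (1 + 3 * i : ℝ) ≤ m := by exact_mod_cast hmi
    have : 0 ≤ ε * ((m : ℝ) - (1 + 3 * i)) := mul_nonneg hε0.le (by linarith)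
    linarith
  rcases le_or_gt d l with hdl | hdl
  · have : (d : ℝ) ≤ l := by exact_mod_cast hdl
    linarith
  exact hball (by simpa [abs_of_pos hε0] using hεδ) i (Finset.mem_range.mpr hNi) m
    (Finset.mem_range.mpr (by omega)) l (Finset.mem_range.mpr hdl) h
end
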